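/- Let G be the group presented by the generating set S and relation set R of Theorem 2.14 (the presentation of the virtual Thompson group VF) as described in the context. Let F be Thompson's group F, given by the infinite presentation with generators x₀, x₁, x₂, … and relations x_k⁻¹ x_n x_k = x_{n+1} for all integers 0 ≤ k < n. Then the assignment x_k ↦ X_{x, x→xx, x^k} (the generator of family (ii) with prefix letter x, rewriting rule x → xx, and suffix word x^k) extends to an injective group homomorphism F → G. In particular, Thompson's group F is (isomorphic to) a subgroup of the virtual Thompson group VF. -/

import Mathlib

/-- The alphabet Σ = {x, v}. -/
inductive Letter : Type
  | x | v
deriving DecidableEq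

/-- Words on Σ (possibly empty). -/
abbrev Word := List Letter

/-- A target word t ∈ {xx, xv, vx, vv}, encoded as the pair of its two letters. -/
abbrev Tgt := Letter × Letter

/-- The word (of length two) corresponding to a target. -/
def tw (t : Tgt) : Word := [t.1, t.2]

/-- Index for the three generators of family (i): X_{v→vv}, X_{v→vx}, X_{v→xv}. -/
inductive G1 : Type
  | vv   -- X_{v→vv}
  | vx   -- X_{v→vx}
  | xv   -- X_{v→xv}
deriving DecidableEq

/-- Index for the four kinds of generators of family (iii):
X_{x→vv,u}, X_{x→vx,u}, X_{v→xx,u}, X_{v→xv,u}. -/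
inductive G3 : Type
  | xvv  -- X_{x→vv,u}
  | xvx  -- X_{x→vx,u}
  | vxx  -- X_{v→xx,u}
  | vxv  -- X_{v→xv,u}
deriving DecidableEq

/-- The generating set S of the presentation of the virtual Thompson group VF. -/
inductive Gen : Type
  /-- family (i): X_{v→vv}, X_{v→vx}, X_{v→xv} -/
  | fam1 : G1 → Gen
  /-- family (ii): X_{a, s→t, u} with a ∈ {x,v}, s ∈ {x,v}, t ∈ {xx,xv,vx,vv}, u any word -/
  | fam2 : Letter → Letter → Tgt → Word → Gen
  /-- family (iii): X_{c, u} with c one of x→vv, x→vx, v→xx, v→xv and u a nonempty word -/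
  | fam3 : G3 → {u : Word // u ≠ []} → Gen

/-- The corresponding generator of the free group on S. -/
def X (g : Gen) : FreeGroup Gen := FreeGroup.of g

open Letter in
/-- The relators of the presentation of VF (each relation A·B = C·D becomes the
relator A·B·(C·D)⁻¹). -/
inductive VFRel : FreeGroup Gen → Prop
  /-- (R1) and (R2): for a ∈ {x, v},
  X_{a,s₁→t₁, p s₂ q} X_{a,s₂→t₂, q} = X_{a,s₂→t₂, q} X_{a,s₁→t₁, p t₂ q}. -/
  | r12 (a s₁ s₂ : Letter) (t₁ t₂ : Tgt) (p q : Word) :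
      VFRel (X (.fam2 a s₁ t₁ (p ++ [s₂] ++ q)) * X (.fam2 a s₂ t₂ q) *
        (X (.fam2 a s₂ t₂ q) * X (.fam2 a s₁ t₁ (p ++ tw t₂ ++ q)))⁻¹)
  /-- (R3): X_{x,s→t,q} X_{x→vv, p t q} = X_{x→vv, p s q} X_{v,s→t,q}. -/
  | r3 (s : Letter) (t : Tgt) (p q : Word) :
      VFRel (X (.fam2 x s t q) * X (.fam3 .xvv ⟨p ++ tw t ++ q, by simp [tw]⟩) *
        (X (.fam3 .xvv ⟨p ++ [s] ++ q, by simp⟩) * X (.fam2 v s t q))⁻¹)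
  /-- (R4): X_{x,s→t,q} X_{x→vx, p t q} = X_{x→vx, p s q} X_{v,s→t,q}. -/
  | r4 (s : Letter) (t : Tgt) (p q : Word) :
      VFRel (X (.fam2 x s t q) * X (.fam3 .xvx ⟨p ++ tw t ++ q, by simp [tw]⟩) *
        (X (.fam3 .xvx ⟨p ++ [s] ++ q, by simp⟩) * X (.fam2 v s t q))⁻¹)
  /-- (R5): X_{v,s→t,q} X_{v→xx, p t q} = X_{v→xx, p s q} X_{x,s→t,q}. -/
  | r5 (s : Letter) (t : Tgt) (p q : Word) :
      VFRel (X (.fam2 v s t q) * X (.fam3 .vxx ⟨p ++ tw t ++ q, by simp [tw]⟩) *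
        (X (.fam3 .vxx ⟨p ++ [s] ++ q, by simp⟩) * X (.fam2 x s t q))⁻¹)
  /-- (R6): X_{v,s→t,q} X_{v→xv, p t q} = X_{v→xv, p s q} X_{x,s→t,q}. -/
  | r6 (s : Letter) (t : Tgt) (p q : Word) :
      VFRel (X (.fam2 v s t q) * X (.fam3 .vxv ⟨p ++ tw t ++ q, by simp [tw]⟩) *
        (X (.fam3 .vxv ⟨p ++ [s] ++ q, by simp⟩) * X (.fam2 x s t q))⁻¹)

/-- The set of relators. -/
def VFrels : Set (FreeGroup Gen) := {g | VFRel g}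

/-- The virtual Thompson group VF, as the presented group ⟨S | R⟩. -/
abbrev VF := PresentedGroup VFrels

/-- The relators of the standard infinite presentation of Thompson's group F:
generators x₀, x₁, x₂, … (indexed by ℕ) and relations x_k⁻¹ x_n x_k = x_{n+1}
for 0 ≤ k < n. -/
def Frels : Set (FreeGroup ℕ) :=
  {r | ∃ n k : ℕ, k < n ∧
    r = (FreeGroup.of k)⁻¹ * FreeGroup.of n * FreeGroup.of k * (FreeGroup.of (n + 1))⁻¹}

/-- Thompson's group F with its standard infinite presentation. -/
abbrev ThompsonF := PresentedGroup Frels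

/-- The defining relation of F in product form. -/
theorem thompsonF_rel (n k : ℕ) (h : k < n) :
    (PresentedGroup.of (rels := Frels) n) * PresentedGroup.of k =
      PresentedGroup.of k * PresentedGroup.of (n + 1) := by
  have h1 : PresentedGroup.mk Frels ((FreeGroup.of k)⁻¹ * FreeGroup.of n * FreeGroup.of k *
      (FreeGroup.of (n + 1))⁻¹) = 1 :=
    PresentedGroup.one_of_mem ⟨n, k, h, rfl⟩
  simp only [map_mul, map_inv] at h1
  have h2 := mul_inv_eq_one.mp h1
  rw [mul_assoc] at h2
  exact inv_mul_eq_iff_eq_mul.mp h2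

/-- The length retraction on generators. -/
def retrGen : Gen → ThompsonF
  | .fam1 _ => 1
  | .fam2 _ _ _ u => PresentedGroup.of u.length
  | .fam3 _ _ => 1

theorem retrGen_rels : ∀ r ∈ VFrels, FreeGroup.lift retrGen r = 1 := by
  intro r hr
  cases hr with
  | r12 a s₁ s₂ t₁ t₂ p q =>
    simp only [X, map_mul, map_inv, FreeGroup.lift_apply_of, retrGen, mul_inv_eq_one]
    have h := thompsonF_rel (p ++ [s₂] ++ q).length q.length (by simp; omega)
    rw [h]
    congr 2
    simp [tw]
    omega
  | r3 s t p q => simp [X, retrGen]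
  | r4 s t p q => simp [X, retrGen]
  | r5 s t p q => simp [X, retrGen]
  | r6 s t p q => simp [X, retrGen]

/-- The images of the generators of F. -/
def embGen (k : ℕ) : VF :=
  PresentedGroup.of (rels := VFrels)
    (Gen.fam2 Letter.x Letter.x (Letter.x, Letter.x) (List.replicate k Letter.x))

theorem embGen_rels : ∀ r ∈ Frels, FreeGroup.lift embGen r = 1 := by
  rintro r ⟨n, k, h, rfl⟩
  have h1 := PresentedGroup.one_of_mem (rels := VFrels)
    (VFRel.r12 .x .x .x (.x, .x) (.x, .x)
      (List.replicate (n - k - 1) .x) (List.replicate k .x))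
  have e1 : List.replicate (n - k - 1) Letter.x ++ [Letter.x] ++ List.replicate k Letter.x
      = List.replicate n Letter.x := by
    rw [List.eq_replicate_iff]
    refine ⟨by simp; omega, by simp; tauto⟩
  have e2 : List.replicate (n - k - 1) Letter.x ++ tw (Letter.x, Letter.x) ++
      List.replicate k Letter.x = List.replicate (n + 1) Letter.x := by
    rw [List.eq_replicate_iff]
    refine ⟨by simp [tw]; omega, by simp [tw]; tauto⟩
  rw [e1, e2, map_mul, map_inv, mul_inv_eq_one, map_mul, map_mul] at h1
  have h2 : embGen n * embGen k = embGen k * embGen (n + 1) := h1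
  simp only [map_mul, map_inv, FreeGroup.lift_apply_of]
  rw [mul_inv_eq_one, mul_assoc, h2, inv_mul_cancel_left]

/-- The assignment x_k ↦ X_{x, x→xx, x^k} extends to an injective group homomorphism
F → VF; in particular Thompson's group F is a subgroup of VF. -/
theorem thompsonF_embeds_in_VF :
    ∃ φ : ThompsonF →* VF, Function.Injective φ ∧
      ∀ k : ℕ, φ (PresentedGroup.of (rels := Frels) k) =
        PresentedGroup.of (rels := VFrels)
          (Gen.fam2 Letter.x Letter.x (Letter.x, Letter.x) (List.replicate k Letter.x)) := by
  refine ⟨PresentedGroup.toGroup embGen_rels, ?_, fun k => PresentedGroup.toGroup.of embGen_rels⟩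
  have h : (PresentedGroup.toGroup retrGen_rels).comp (PresentedGroup.toGroup embGen_rels) =
      MonoidHom.id ThompsonF := by
    apply PresentedGroup.ext
    intro k
    simp [PresentedGroup.toGroup.of, embGen, retrGen]
  exact Function.LeftInverse.injective (g := PresentedGroup.toGroup retrGen_rels)
    (fun y => DFunLike.congr_fun h y)
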